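/- Let m > 0, let μ be a finite Borel measure on ℝ³ whose topological support Σ is compact, and let g : ℝ³ → ℂ⁴ be μ-integrable. Then for every x in the open set ℝ³∖Σ the integral Φg(x) := ∫ φ(x−y) g(y) dμ(y) converges absolutely, the function Φg is smooth on ℝ³∖Σ, and it satisfies −i Σ_{j=1}^3 α_j ∂_j (Φg)(x) + m β (Φg)(x) = 0 for every x ∈ ℝ³∖Σ. -/

import Mathlib

open Matrix

/-- The Pauli matrices `σ₁, σ₂, σ₃`. -/
noncomputable def pauli : Fin 3 → Matrix (Fin 2) (Fin 2) ℂ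
  | 0 => !![0, 1; 1, 0]
  | 1 => !![0, -Complex.I; Complex.I, 0]
  | 2 => !![1, 0; 0, -1]

/-- The Dirac matrices `α₁, α₂, α₃`, given in 2×2 blocks by `α_j = [[0, σ_j], [σ_j, 0]]`. -/
noncomputable def diracAlpha : Fin 3 → Matrix (Fin 4) (Fin 4) ℂ
  | 0 => !![0, 0, 0, 1;
            0, 0, 1, 0;
            0, 1, 0, 0;
            1, 0, 0, 0]
  | 1 => !![0, 0, 0, -Complex.I;
            0, 0, Complex.I, 0;
            0, -Complex.I, 0, 0;
            Complex.I, 0, 0, 0]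
  | 2 => !![0, 0, 1, 0;
            0, 0, 0, -1;
            1, 0, 0, 0;
            0, -1, 0, 0]

/-- The Dirac matrix `β = [[I₂, 0], [0, -I₂]]`. -/
noncomputable def diracBeta : Matrix (Fin 4) (Fin 4) ℂ :=
  !![1, 0, 0, 0;
     0, 1, 0, 0;
     0, 0, -1, 0;
     0, 0, 0, -1]

/-- For `p ∈ ℝ³`, the matrix `α·p = Σ_j p_j α_j`. -/
noncomputable def alphaDot (p : EuclideanSpace ℝ (Fin 3)) : Matrix (Fin 4) (Fin 4) ℂ :=
  ∑ j : Fin 3, (p j : ℂ) • diracAlpha j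


/-- The fundamental solution `φ` of the free Dirac operator `D = -i α·∇ + m β`:
`φ(x) = (e^{-m|x|}/(4π|x|)) (m β + (1 + m|x|) i (α·x)/|x|²)` for `x ≠ 0`. -/
noncomputable def phiFund (m : ℝ) (x : EuclideanSpace ℝ (Fin 3)) : Matrix (Fin 4) (Fin 4) ℂ :=
  ((Real.exp (-(m * ‖x‖)) / (4 * Real.pi * ‖x‖) : ℝ) : ℂ) •
    ((m : ℂ) • diracBeta +
      (((1 + m * ‖x‖) / ‖x‖ ^ 2 : ℝ) : ℂ) • (Complex.I • alphaDot x))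


open MeasureTheory

/-- The single-layer potential `Φg(x) = ∫ φ(x - y) g(y) dμ(y)`. -/
noncomputable def singleLayer (m : ℝ) (μ : Measure (EuclideanSpace ℝ (Fin 3)))
    (g : EuclideanSpace ℝ (Fin 3) → Fin 4 → ℂ) (x : EuclideanSpace ℝ (Fin 3)) : Fin 4 → ℂ :=
  ∫ y, (phiFund m (x - y)).mulVec (g y) ∂μ


/-!
Off the compact set `S` the kernel `y ↦ φ(x - y)` and its derivatives are bounded on `S`, locally
uniformly in `x`, so `Φg` can be differentiated under the integral. The derivative is again a
convolution with a kernel smooth off the origin, whence smoothness by induction; and a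
constant-coefficient operator applied to `Φg` is the integral of that operator applied to the
kernel. Finally `φ(z) = a(|z|) β + b(|z|) i α·z`, and for such matrix fields the Clifford relations
reduce the Dirac equation to the radial system `a' = -m r b`, `r b' = -(m a + 3 b)`.
-/

open Filter Set Topology
open scoped Convolution ContDiff

section SingularConvolution

universe u

variable {𝕜 : Type*} [RCLike 𝕜] {E E' G : Type u} {F H : Type*}
  [NormedAddCommGroup E] [NormedAddCommGroup E'] [NormedAddCommGroup F]
  [NormedAddCommGroup G] [NormedAddCommGroup H]
  {S U : Set E} {x : E} {k : E → E'}

lemma eventually_forall_sub_mem (hS : IsCompact S) (hU : IsOpen U) (hx : ∀ y ∈ S, x - y ∈ U) :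
    ∀ᶠ z in 𝓝 x, ∀ y ∈ S, z - y ∈ U :=
  hS.eventually_forall_of_forall_eventually fun y hy =>
    (continuous_fst.sub continuous_snd).continuousAt.eventually_mem (hU.mem_nhds (hx y hy))

lemma exists_eventually_forall_norm_comp_sub_le (hS : IsCompact S) (hU : IsOpen U)
    (hk : ContinuousOn k U) (hx : ∀ y ∈ S, x - y ∈ U) :
    ∃ C, ∀ᶠ z in 𝓝 x, ∀ y ∈ S, ‖k (z - y)‖ ≤ C := by
  obtain ⟨C, hC⟩ := hS.exists_bound_of_continuousOn
    (hk.comp (continuous_const.sub continuous_id).continuousOn hx)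
  refine ⟨C + 1, hS.eventually_forall_of_forall_eventually fun y hy => ?_⟩
  have hcont : ContinuousAt (fun p : E × E => ‖k (p.1 - p.2)‖) (x, y) :=
    ((hk.continuousAt (hU.mem_nhds (hx y hy))).comp_of_eq
      (continuous_fst.sub continuous_snd).continuousAt rfl).norm
  exact (hcont.eventually_lt_const ((hC y hy).trans_lt (lt_add_one C))).mono fun _ => le_of_lt

variable [NormedSpace 𝕜 E'] [NormedSpace 𝕜 F] [NormedSpace 𝕜 G] {f : E → F}
  (L : F →L[𝕜] E' →L[𝕜] G)

lemma exists_eventually_forall_norm_convolution_integrand_le (hS : IsCompact S)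
    (hU : IsOpen U) (hk : ContinuousOn k U) (hx : ∀ y ∈ S, x - y ∈ U) :
    ∃ C, ∀ᶠ z in 𝓝 x, ∀ y ∈ S, ‖L (f y) (k (z - y))‖ ≤ C * ‖f y‖ := by
  obtain ⟨C, hC⟩ := exists_eventually_forall_norm_comp_sub_le hS hU hk hx
  refine ⟨‖L‖ * C, hC.mono fun z hz y hy => ?_⟩
  calc ‖L (f y) (k (z - y))‖ ≤ ‖L‖ * ‖f y‖ * ‖k (z - y)‖ := L.le_opNorm₂ _ _
    _ ≤ ‖L‖ * ‖f y‖ * C := by gcongr; exact hz y hy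
    _ = ‖L‖ * C * ‖f y‖ := mul_right_comm _ _ _

variable [MeasurableSpace E] [BorelSpace E] {μ : Measure E}

lemma aestronglyMeasurable_convolution_integrand_of_continuousOn (hS : IsCompact S)
    (hμ : ∀ᵐ y ∂μ, y ∈ S) (hf : AEStronglyMeasurable f μ) (hk : ContinuousOn k U)
    (hx : ∀ y ∈ S, x - y ∈ U) :
    AEStronglyMeasurable (fun y => L (f y) (k (x - y))) μ := by
  have hkS : ContinuousOn (fun y => k (x - y)) S :=
    hk.comp (continuous_const.sub continuous_id).continuousOn hx
  have hkμ := hkS.aestronglyMeasurable_of_isCompact (μ := μ) hS hS.measurableSet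
  rw [Measure.restrict_eq_self_of_ae_mem hμ] at hkμ
  exact L.aestronglyMeasurable_comp₂ hf hkμ

theorem convolutionExistsAt_of_continuousOn (hS : IsCompact S) (hμ : ∀ᵐ y ∂μ, y ∈ S)
    (hf : Integrable f μ) (hU : IsOpen U) (hk : ContinuousOn k U) (hx : ∀ y ∈ S, x - y ∈ U) :
    ConvolutionExistsAt f k x L μ := by
  obtain ⟨C, hC⟩ := exists_eventually_forall_norm_convolution_integrand_le (f := f) L hS hU hk hx
  exact (hf.norm.const_mul C).mono'
    (aestronglyMeasurable_convolution_integrand_of_continuousOn L hS hμ hf.1 hk hx)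
    (hμ.mono hC.self_of_nhds)

variable [NormedSpace ℝ G]

theorem continuousAt_convolution_of_continuousOn (hS : IsCompact S) (hμ : ∀ᵐ y ∂μ, y ∈ S)
    (hf : Integrable f μ) (hU : IsOpen U) (hk : ContinuousOn k U) (hx : ∀ y ∈ S, x - y ∈ U) :
    ContinuousAt (f ⋆[L, μ] k) x := by
  obtain ⟨C, hC⟩ := exists_eventually_forall_norm_convolution_integrand_le (f := f) L hS hU hk hx
  refine continuousAt_of_dominated ?_ (hC.mono fun z hz => hμ.mono hz) (hf.norm.const_mul C)
    (hμ.mono fun y hy => ?_)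
  · exact (eventually_forall_sub_mem hS hU hx).mono fun z hz =>
      aestronglyMeasurable_convolution_integrand_of_continuousOn L hS hμ hf.1 hk hz
  · exact (L (f y)).continuous.continuousAt.comp
      ((hk.continuousAt (hU.mem_nhds (hx y hy))).comp_of_eq
        (continuous_id.sub continuous_const).continuousAt rfl)

variable [NormedSpace 𝕜 E]

theorem hasFDerivAt_convolution_of_contDiffOn (hS : IsCompact S) (hμ : ∀ᵐ y ∂μ, y ∈ S)
    (hf : Integrable f μ) (hU : IsOpen U) (hk : ContDiffOn 𝕜 1 k U) (hx : ∀ y ∈ S, x - y ∈ U) :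
    HasFDerivAt (f ⋆[L, μ] k) ((f ⋆[L.precompR E, μ] fderiv 𝕜 k) x) x := by
  have hk' : ContinuousOn (fderiv 𝕜 k) U := hk.continuousOn_fderiv_of_isOpen hU le_rfl
  obtain ⟨C, hC⟩ := exists_eventually_forall_norm_convolution_integrand_le (f := f)
    (L.precompR E) hS hU hk' hx
  have hxU := eventually_forall_sub_mem hS hU hx
  refine hasFDerivAt_integral_of_dominated_of_fderiv_le
    (F' := fun z y => L.precompR E (f y) (fderiv 𝕜 k (z - y))) (hC.and hxU)
    (hxU.mono fun z hz => aestronglyMeasurable_convolution_integrand_of_continuousOn L hS hμ hf.1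
      hk.continuousOn hz)
    (convolutionExistsAt_of_continuousOn L hS hμ hf hU hk.continuousOn hx)
    (aestronglyMeasurable_convolution_integrand_of_continuousOn (L.precompR E) hS hμ hf.1 hk' hx)
    (hμ.mono fun y hy z hz => hz.1 y hy) (hf.norm.const_mul C) (hμ.mono fun y hy z hz => ?_)
  have hkz : HasFDerivAt k (fderiv 𝕜 k (z - y)) (z - y) :=
    ((hk.differentiableOn one_ne_zero).differentiableAt
      (hU.mem_nhds (hz.2 y hy))).hasFDerivAt
  exact (L (f y)).hasFDerivAt.comp z ((hasFDerivAt_comp_sub y).2 hkz)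

theorem contDiffOn_convolution_of_contDiffOn {n : ℕ∞} (hS : IsCompact S)
    (hμ : ∀ᵐ y ∂μ, y ∈ S) (hf : Integrable f μ) (hU : IsOpen U) (hk : ContDiffOn 𝕜 n k U) :
    ContDiffOn 𝕜 n (f ⋆[L, μ] k) {x | ∀ y ∈ S, x - y ∈ U} := by
  -- The derivative is again such a convolution, with values in a new space `E →L[𝕜] G`; this is
  -- why `E`, `E'` and `G` share a universe.
  induction n using ENat.nat_induction generalizing E' G with
  | zero =>
    rw [WithTop.coe_zero, contDiffOn_zero] at hk ⊢
    exact fun x hx =>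
      (continuousAt_convolution_of_continuousOn L hS hμ hf hU hk hx).continuousWithinAt
  | succ n ih =>
    simp only [Nat.succ_eq_add_one, Nat.cast_add, Nat.cast_one, WithTop.coe_add,
      WithTop.coe_natCast, WithTop.coe_one] at hk ⊢
    have hderiv : ∀ x ∈ {x | ∀ y ∈ S, x - y ∈ U},
        HasFDerivAt (f ⋆[L, μ] k) ((f ⋆[L.precompR E, μ] fderiv 𝕜 k) x) x := fun x hx =>
      hasFDerivAt_convolution_of_contDiffOn L hS hμ hf hU hk.one_of_succ hx
    have hopen : IsOpen {x | ∀ y ∈ S, x - y ∈ U} :=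
      isOpen_iff_mem_nhds.2 fun x hx => eventually_forall_sub_mem hS hU hx
    rw [contDiffOn_succ_iff_fderiv_of_isOpen hU] at hk
    rw [contDiffOn_succ_iff_fderiv_of_isOpen hopen]
    exact ⟨fun x hx => (hderiv x hx).differentiableAt.differentiableWithinAt, by simp,
      (ih (L.precompR E) hk.2.2).congr fun x hx => (hderiv x hx).fderiv⟩
  | top ih =>
    rw [contDiffOn_infty] at hk ⊢
    exact fun n => ih n L (hk n)

variable [NormedSpace 𝕜 H] [NormedSpace ℝ H]

/-- The first-order linear differential operator with constant coefficients `u ↦ A (Du) + B u`. -/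
noncomputable def firstOrderOperator (A : (E →L[𝕜] G) →L[𝕜] H) (B : G →L[𝕜] H) (u : E → G)
    (x : E) : H :=
  A (fderiv 𝕜 u x) + B (u x)

theorem firstOrderOperator_convolution [CompleteSpace G] [CompleteSpace H]
    (A : (E →L[𝕜] G) →L[𝕜] H) (B : G →L[𝕜] H) (hS : IsCompact S) (hμ : ∀ᵐ y ∂μ, y ∈ S)
    (hf : Integrable f μ) (hU : IsOpen U) (hk : ContDiffOn 𝕜 1 k U) (hx : ∀ y ∈ S, x - y ∈ U) :
    firstOrderOperator A B (f ⋆[L, μ] k) x =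
      ∫ y, firstOrderOperator A B (fun z => L (f y) (k z)) (x - y) ∂μ := by
  have hint : Integrable (fun y => L (f y) (k (x - y))) μ :=
    convolutionExistsAt_of_continuousOn L hS hμ hf hU hk.continuousOn hx
  have hint' : Integrable (fun y => L.precompR E (f y) (fderiv 𝕜 k (x - y))) μ :=
    convolutionExistsAt_of_continuousOn (L.precompR E) hS hμ hf hU
      (hk.continuousOn_fderiv_of_isOpen hU le_rfl) hx
  have hfderiv : ∀ y ∈ S, fderiv 𝕜 (fun z => L (f y) (k z)) (x - y) =
      L.precompR E (f y) (fderiv 𝕜 k (x - y)) := fun y hy =>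
    ((L (f y)).hasFDerivAt.comp _ ((hk.differentiableOn one_ne_zero).differentiableAt
      (hU.mem_nhds (hx y hy))).hasFDerivAt).fderiv
  calc firstOrderOperator A B (f ⋆[L, μ] k) x
      = A (∫ y, L.precompR E (f y) (fderiv 𝕜 k (x - y)) ∂μ) + B (∫ y, L (f y) (k (x - y)) ∂μ) := by
        rw [firstOrderOperator, (hasFDerivAt_convolution_of_contDiffOn L hS hμ hf hU hk hx).fderiv]
        rfl
    _ = ∫ y, A (L.precompR E (f y) (fderiv 𝕜 k (x - y))) + B (L (f y) (k (x - y))) ∂μ := by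
        rw [← A.integral_comp_comm hint', ← B.integral_comp_comm hint,
          integral_add (A.integrable_comp hint') (B.integrable_comp hint)]
    _ = ∫ y, firstOrderOperator A B (fun z => L (f y) (k z)) (x - y) ∂μ :=
        integral_congr_ae <| hμ.mono fun y hy => by
          simp only [firstOrderOperator, hfderiv y hy]

end SingularConvolution

section RadialDerivative

variable {E : Type*} [NormedAddCommGroup E] [InnerProductSpace ℝ E] {x : E}

lemma hasFDerivAt_norm_of_ne_zero (hx : x ≠ 0) :
    HasFDerivAt (fun y : E => ‖y‖) (‖x‖⁻¹ • innerSL ℝ x) x := by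
  have hsqrt :=
    (hasStrictFDerivAt_norm_sq x).hasFDerivAt.sqrt (pow_ne_zero 2 (norm_ne_zero_iff.2 hx))
  simp only [Real.sqrt_sq (norm_nonneg _)] at hsqrt
  refine hsqrt.congr_fderiv ?_
  rw [← Nat.cast_smul_eq_nsmul ℝ, smul_smul]
  congr 1
  field_simp
  norm_num

lemma hasFDerivAt_comp_norm {a : ℝ → ℝ} {a' : ℝ} (ha : HasDerivAt a a' ‖x‖) (hx : x ≠ 0) :
    HasFDerivAt (fun y : E => a ‖y‖) ((a' / ‖x‖) • innerSL ℝ x) x := by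
  rw [div_eq_mul_inv, mul_smul]
  exact ha.comp_hasFDerivAt x (hasFDerivAt_norm_of_ne_zero hx)

end RadialDerivative

section DiracMatrices

lemma alphaDot_mul_self (z : EuclideanSpace ℝ (Fin 3)) :
    alphaDot z * alphaDot z = ((‖z‖ ^ 2 : ℝ) : ℂ) • (1 : Matrix (Fin 4) (Fin 4) ℂ) := by
  rw [EuclideanSpace.real_norm_sq_eq]
  ext i j
  fin_cases i <;> fin_cases j <;>
    simp [alphaDot, diracAlpha, Fin.sum_univ_three, Matrix.mul_apply, Fin.sum_univ_four] <;>
    grind [Complex.I_sq]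

lemma alphaDot_single (j : Fin 3) : alphaDot (EuclideanSpace.single j 1) = diracAlpha j := by
  simp [alphaDot]

lemma diracAlpha_mul_self (j : Fin 3) : diracAlpha j * diracAlpha j = 1 := by
  simpa [alphaDot_single] using alphaDot_mul_self (EuclideanSpace.single j 1)

lemma diracAlpha_mul_diracBeta (j : Fin 3) :
    diracAlpha j * diracBeta = -(diracBeta * diracAlpha j) := by
  ext i l
  fin_cases j <;> fin_cases i <;> fin_cases l <;> simp [diracAlpha, diracBeta]

lemma alphaDot_mul_diracBeta (z : EuclideanSpace ℝ (Fin 3)) :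
    alphaDot z * diracBeta = -(diracBeta * alphaDot z) := by
  simp only [alphaDot, Finset.sum_mul, Finset.mul_sum, smul_mul_assoc, mul_smul_comm,
    diracAlpha_mul_diracBeta, smul_neg, Finset.sum_neg_distrib]

lemma diracBeta_mul_self : diracBeta * diracBeta = 1 := by
  ext i j
  fin_cases i <;> fin_cases j <;> simp [diracBeta]

end DiracMatrices

section RadialMatrixField

open scoped Matrix.Norms.Elementwise

variable {a b : ℝ → ℝ} {a' b' m : ℝ} {z : EuclideanSpace ℝ (Fin 3)}

/-- The matrix fields `z ↦ a(|z|) β + b(|z|) i α·z`, the class of kernels to which the fundamental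
solution belongs. -/
noncomputable def radialMatrixField (a b : ℝ → ℝ) (z : EuclideanSpace ℝ (Fin 3)) :
    Matrix (Fin 4) (Fin 4) ℂ :=
  a ‖z‖ • diracBeta + b ‖z‖ • (Complex.I • alphaDot z)

/-- `alphaDot` as a real-linear map, so that its derivative is available. -/
noncomputable def alphaDotCLM : EuclideanSpace ℝ (Fin 3) →L[ℝ] Matrix (Fin 4) (Fin 4) ℂ :=
  ∑ j, (EuclideanSpace.proj j : EuclideanSpace ℝ (Fin 3) →L[ℝ] ℝ).smulRight (diracAlpha j)

lemma coe_alphaDotCLM : ⇑alphaDotCLM = alphaDot := by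
  ext1 z
  simp [alphaDotCLM, alphaDot]

lemma contDiffAt_radialMatrixField {n : WithTop ℕ∞} (ha : ContDiffAt ℝ n a ‖z‖)
    (hb : ContDiffAt ℝ n b ‖z‖) (hz : z ≠ 0) : ContDiffAt ℝ n (radialMatrixField a b) z := by
  have hnorm : ContDiffAt ℝ n (fun z : EuclideanSpace ℝ (Fin 3) => ‖z‖) z := contDiffAt_norm ℝ hz
  have halpha : ContDiffAt ℝ n alphaDot z := coe_alphaDotCLM ▸ alphaDotCLM.contDiff.contDiffAt
  exact ((ha.comp z hnorm).smul contDiffAt_const).add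
    ((hb.comp z hnorm).smul (halpha.const_smul Complex.I))

lemma fderiv_radialMatrixField_apply (ha : HasDerivAt a a' ‖z‖) (hb : HasDerivAt b b' ‖z‖)
    (hz : z ≠ 0) (h : EuclideanSpace ℝ (Fin 3)) :
    fderiv ℝ (radialMatrixField a b) z h =
      (a' / ‖z‖ * inner ℝ z h) • diracBeta +
        (b ‖z‖ • (Complex.I • alphaDot h) +
          (b' / ‖z‖ * inner ℝ z h) • (Complex.I • alphaDot z)) := by
  have halpha : HasFDerivAt alphaDot alphaDotCLM z := by
    rw [← coe_alphaDotCLM]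
    exact alphaDotCLM.hasFDerivAt
  have hfield : HasFDerivAt (radialMatrixField a b) _ z :=
    ((hasFDerivAt_comp_norm ha hz).smul_const diracBeta).add
      ((hasFDerivAt_comp_norm hb hz).smul (halpha.const_smul Complex.I))
  rw [hfield.fderiv, ← coe_alphaDotCLM]
  rfl

lemma sum_diracAlpha_mul_fderiv_radialMatrixField (ha : HasDerivAt a a' ‖z‖)
    (hb : HasDerivAt b b' ‖z‖) (hz : z ≠ 0) :
    ∑ j, diracAlpha j * fderiv ℝ (radialMatrixField a b) z (EuclideanSpace.single j 1) =
      (a' / ‖z‖) • (alphaDot z * diracBeta) + (3 * b ‖z‖ + ‖z‖ * b') • (Complex.I • 1) := by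
  have hterm : ∀ j, diracAlpha j *
      fderiv ℝ (radialMatrixField a b) z (EuclideanSpace.single j 1) =
        (a' / ‖z‖) • (((z j : ℂ) • diracAlpha j) * diracBeta) + b ‖z‖ • (Complex.I • 1) +
          (b' / ‖z‖) • (Complex.I • (((z j : ℂ) • diracAlpha j) * alphaDot z)) := fun j => by
    rw [fderiv_radialMatrixField_apply ha hb hz, alphaDot_single, ← diracAlpha_mul_self j]
    simp only [EuclideanSpace.inner_single_right, conj_trivial, one_mul, mul_add, mul_smul_comm,
      smul_mul_assoc, Complex.coe_smul]
    module
  have hr : ‖z‖ ≠ 0 := norm_ne_zero_iff.2 hz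
  calc ∑ j, diracAlpha j * fderiv ℝ (radialMatrixField a b) z (EuclideanSpace.single j 1)
      = (a' / ‖z‖) • (alphaDot z * diracBeta) + (3 * b ‖z‖) • (Complex.I • 1) +
          (b' / ‖z‖) • (Complex.I • (alphaDot z * alphaDot z)) := by
        simp only [hterm, Finset.sum_add_distrib, ← Finset.smul_sum, ← Finset.sum_mul,
          ← alphaDot.eq_1 z, Finset.sum_const, Finset.card_univ, Fintype.card_fin]
        module
    _ = (a' / ‖z‖) • (alphaDot z * diracBeta) + (3 * b ‖z‖ + ‖z‖ * b') • (Complex.I • 1) := by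
        rw [alphaDot_mul_self, smul_comm Complex.I, Complex.coe_smul, smul_smul, add_assoc,
          ← add_smul]
        congr 3
        field_simp

theorem dirac_radialMatrixField (ha : HasDerivAt a (-(m * ‖z‖ * b ‖z‖)) ‖z‖)
    (hb : HasDerivAt b (-(m * a ‖z‖ + 3 * b ‖z‖) / ‖z‖) ‖z‖) (hz : z ≠ 0) :
    (-Complex.I) • ∑ j, diracAlpha j *
        fderiv ℝ (radialMatrixField a b) z (EuclideanSpace.single j 1) +
      (m : ℂ) • (diracBeta * radialMatrixField a b z) = 0 := by
  have hr : ‖z‖ ≠ 0 := norm_ne_zero_iff.2 hz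
  have ha' : -(m * ‖z‖ * b ‖z‖) / ‖z‖ = -(m * b ‖z‖) := by field_simp
  have hb' : 3 * b ‖z‖ + ‖z‖ * (-(m * a ‖z‖ + 3 * b ‖z‖) / ‖z‖) = -(m * a ‖z‖) := by
    field_simp
    ring
  have hmul : diracBeta * radialMatrixField a b z =
      a ‖z‖ • 1 + b ‖z‖ • (Complex.I • (diracBeta * alphaDot z)) := by
    simp only [radialMatrixField, mul_add, mul_smul_comm, diracBeta_mul_self]
  rw [sum_diracAlpha_mul_fderiv_radialMatrixField ha hb hz, ha', hb', hmul,
    alphaDot_mul_diracBeta]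
  simp only [← Complex.coe_smul]
  push_cast
  match_scalars
  · ring
  · linear_combination (m * a ‖z‖ : ℂ) * Complex.I_sq

end RadialMatrixField

section YukawaPotential

variable {m r : ℝ}

/-- The radial profile `e^{-mr} / (4πr)` of the fundamental solution of `-Δ + m²`. -/
noncomputable def yukawa (m r : ℝ) : ℝ :=
  Real.exp (-(m * r)) / (4 * Real.pi * r)

lemma contDiffAt_yukawa {n : WithTop ℕ∞} (hr : r ≠ 0) : ContDiffAt ℝ n (yukawa m) r := by
  have : 4 * Real.pi * r ≠ 0 := by positivity
  unfold yukawa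
  fun_prop (disch := assumption)

lemma hasDerivAt_yukawa (hr : r ≠ 0) :
    HasDerivAt (yukawa m) (-((1 + m * r) / r * yukawa m r)) r := by
  have hexp : HasDerivAt (fun r => Real.exp (-(m * r))) (Real.exp (-(m * r)) * -(m * 1)) r :=
    ((hasDerivAt_id r).const_mul m).neg.exp
  have hden : 4 * Real.pi * r ≠ 0 := by positivity
  refine (hexp.div ((hasDerivAt_id r).const_mul (4 * Real.pi)) hden).congr_deriv ?_
  simp only [yukawa, id]
  field_simp
  ring

/-- The radial profile `-ψ'(r) / r = (1 + mr) ψ(r) / r²` of the gradient of the Yukawa potential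
`ψ`. -/
noncomputable def yukawaGradient (m r : ℝ) : ℝ :=
  (1 + m * r) / r ^ 2 * yukawa m r

lemma contDiffAt_yukawaGradient {n : WithTop ℕ∞} (hr : r ≠ 0) :
    ContDiffAt ℝ n (yukawaGradient m) r := by
  have hy : ContDiffAt ℝ n (yukawa m) r := contDiffAt_yukawa hr
  have : r ^ 2 ≠ 0 := pow_ne_zero 2 hr
  unfold yukawaGradient
  fun_prop (disch := assumption)

lemma hasDerivAt_yukawaGradient (hr : r ≠ 0) :
    HasDerivAt (yukawaGradient m) (-(m * (m * yukawa m r) + 3 * yukawaGradient m r) / r) r := by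
  have hfactor := (((hasDerivAt_id r).const_mul m).const_add 1).div (hasDerivAt_pow 2 r)
    (pow_ne_zero 2 hr)
  refine (hfactor.mul (hasDerivAt_yukawa (m := m) hr)).congr_deriv ?_
  simp only [yukawaGradient, id, Pi.div_apply]
  field_simp
  ring

lemma phiFund_eq_radialMatrixField (m : ℝ) :
    phiFund m = radialMatrixField (fun r => m * yukawa m r) (yukawaGradient m) := by
  ext1 z
  simp only [phiFund, radialMatrixField, yukawaGradient, yukawa, ← Complex.coe_smul, smul_add,
    smul_smul, mul_comm]
  push_cast
  simp [mul_assoc]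

end YukawaPotential

lemma forall_sub_mem_compl_zero_iff {G : Type*} [AddGroup G] {S : Set G} {x : G} :
    (∀ y ∈ S, x - y ∈ ({0}ᶜ : Set _)) ↔ x ∉ S := by
  simp only [mem_compl_iff, mem_singleton_iff, sub_eq_zero]
  exact ⟨fun h hx => h x hx rfl, fun hx y hy hxy => hx (hxy ▸ hy)⟩

section SingleLayer

open scoped Matrix.Norms.Elementwise

variable {m : ℝ} {z : EuclideanSpace ℝ (Fin 3)}

lemma contDiffOn_phiFund {n : WithTop ℕ∞} : ContDiffOn ℝ n (phiFund m) {0}ᶜ := fun z hz => by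
  have hr : ‖z‖ ≠ 0 := norm_ne_zero_iff.2 hz
  rw [phiFund_eq_radialMatrixField]
  exact (contDiffAt_radialMatrixField (contDiffAt_const.mul (contDiffAt_yukawa hr))
    (contDiffAt_yukawaGradient hr) hz).contDiffWithinAt

theorem dirac_phiFund (hz : z ≠ 0) :
    (-Complex.I) • ∑ j, diracAlpha j * fderiv ℝ (phiFund m) z (EuclideanSpace.single j 1) +
      (m : ℂ) • (diracBeta * phiFund m z) = 0 := by
  have hr : ‖z‖ ≠ 0 := norm_ne_zero_iff.2 hz
  rw [phiFund_eq_radialMatrixField]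
  refine dirac_radialMatrixField (((hasDerivAt_yukawa hr).const_mul m).congr_deriv ?_)
    (hasDerivAt_yukawaGradient hr) hz
  rw [yukawaGradient]
  field_simp

/-- Matrix-vector multiplication as a bounded real-bilinear map. -/
noncomputable def mulVecCLM :
    Matrix (Fin 4) (Fin 4) ℂ →L[ℝ] (Fin 4 → ℂ) →L[ℝ] (Fin 4 → ℂ) :=
  (Matrix.mulVecBilin ℝ ℝ).toContinuousBilinearMap

lemma mulVecCLM_apply (M : Matrix (Fin 4) (Fin 4) ℂ) (v : Fin 4 → ℂ) :
    mulVecCLM M v = M *ᵥ v := rfl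

/-- The free Dirac operator `-i α·∇ + m β` on spinor fields. -/
noncomputable def diracOperator (m : ℝ) :
    (EuclideanSpace ℝ (Fin 3) → Fin 4 → ℂ) → EuclideanSpace ℝ (Fin 3) → Fin 4 → ℂ :=
  firstOrderOperator
    (∑ j, mulVecCLM (-Complex.I • diracAlpha j) ∘L
      ContinuousLinearMap.apply ℝ (Fin 4 → ℂ) (EuclideanSpace.single j 1))
    (mulVecCLM ((m : ℂ) • diracBeta))

lemma diracOperator_apply (u : EuclideanSpace ℝ (Fin 3) → Fin 4 → ℂ)
    (x : EuclideanSpace ℝ (Fin 3)) :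
    diracOperator m u x =
      (-Complex.I) • ∑ j, diracAlpha j *ᵥ fderiv ℝ u x (EuclideanSpace.single j 1) +
        (m : ℂ) • diracBeta *ᵥ u x := by
  simp [diracOperator, firstOrderOperator, mulVecCLM_apply, Matrix.smul_mulVec, Finset.smul_sum]

theorem diracOperator_phiFund_mulVec (hz : z ≠ 0) (v : Fin 4 → ℂ) :
    diracOperator m (fun z => phiFund m z *ᵥ v) z = 0 := by
  have hphi : HasFDerivAt (phiFund m) (fderiv ℝ (phiFund m) z) z :=
    ((contDiffOn_phiFund.contDiffAt (isOpen_compl_singleton.mem_nhds hz)).differentiableAt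
      one_ne_zero).hasFDerivAt
  have hfield : HasFDerivAt (fun z => phiFund m z *ᵥ v)
      (mulVecCLM.flip v ∘L fderiv ℝ (phiFund m) z) z :=
    (mulVecCLM.flip v).hasFDerivAt.comp z hphi
  have hfderiv : ∀ h, fderiv ℝ (fun z => phiFund m z *ᵥ v) z h =
      fderiv ℝ (phiFund m) z h *ᵥ v := fun h => by
    rw [hfield.fderiv]
    rfl
  have hdirac := congrArg (· *ᵥ v) (dirac_phiFund (m := m) hz)
  simpa only [diracOperator_apply, hfderiv, Matrix.add_mulVec, Matrix.smul_mulVec,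
    Matrix.sum_mulVec, ← Matrix.mulVec_mulVec, Matrix.zero_mulVec] using hdirac

lemma singleLayer_eq_convolution (m : ℝ) (μ : Measure (EuclideanSpace ℝ (Fin 3)))
    (g : EuclideanSpace ℝ (Fin 3) → Fin 4 → ℂ) :
    singleLayer m μ g = g ⋆[mulVecCLM.flip, μ] phiFund m := rfl

variable {μ : Measure (EuclideanSpace ℝ (Fin 3))} {S : Set (EuclideanSpace ℝ (Fin 3))}
  {x : EuclideanSpace ℝ (Fin 3)} {g : EuclideanSpace ℝ (Fin 3) → Fin 4 → ℂ}

theorem integrable_singleLayer_integrand (hS : IsCompact S) (hμ : ∀ᵐ y ∂μ, y ∈ S)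
    (hg : Integrable g μ) (hx : x ∉ S) : Integrable (fun y => phiFund m (x - y) *ᵥ g y) μ :=
  convolutionExistsAt_of_continuousOn mulVecCLM.flip hS hμ hg isOpen_compl_singleton
    (contDiffOn_phiFund (n := 0)).continuousOn (forall_sub_mem_compl_zero_iff.2 hx)

theorem contDiffOn_singleLayer (hS : IsCompact S) (hμ : ∀ᵐ y ∂μ, y ∈ S)
    (hg : Integrable g μ) : ContDiffOn ℝ ∞ (singleLayer m μ g) Sᶜ := by
  have hSc : Sᶜ = {x | ∀ y ∈ S, x - y ∈ ({0}ᶜ : Set _)} :=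
    Set.ext fun _ => forall_sub_mem_compl_zero_iff.symm
  rw [singleLayer_eq_convolution, hSc]
  exact contDiffOn_convolution_of_contDiffOn mulVecCLM.flip hS hμ hg isOpen_compl_singleton
    contDiffOn_phiFund

theorem diracOperator_singleLayer (hS : IsCompact S) (hμ : ∀ᵐ y ∂μ, y ∈ S)
    (hg : Integrable g μ) (hx : x ∉ S) : diracOperator m (singleLayer m μ g) x = 0 := by
  have hxS := forall_sub_mem_compl_zero_iff.2 hx
  calc diracOperator m (singleLayer m μ g) x
      = ∫ y, diracOperator m (fun z => phiFund m z *ᵥ g y) (x - y) ∂μ :=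
        firstOrderOperator_convolution mulVecCLM.flip _ _ hS hμ hg isOpen_compl_singleton
          contDiffOn_phiFund hxS
    _ = 0 := integral_eq_zero_of_ae <| hμ.mono fun y hy =>
        diracOperator_phiFund_mulVec (hxS y hy) (g y)

end SingleLayer

theorem singleLayer_smooth_and_dirac_harmonic_general (m : ℝ)
    (μ : Measure (EuclideanSpace ℝ (Fin 3))) {S : Set (EuclideanSpace ℝ (Fin 3))}
    (hS : IsCompact S) (hμS : μ Sᶜ = 0) (g : EuclideanSpace ℝ (Fin 3) → Fin 4 → ℂ)
    (hg : Integrable g μ) :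
    (∀ x ∉ S, Integrable (fun y => (phiFund m (x - y)).mulVec (g y)) μ) ∧
    ContDiffOn ℝ (⊤ : ℕ∞) (singleLayer m μ g) Sᶜ ∧
    (∀ x ∉ S,
      (-Complex.I) • (∑ j : Fin 3, (diracAlpha j).mulVec
          (fderiv ℝ (singleLayer m μ g) x (EuclideanSpace.single j 1))) +
        (m : ℂ) • diracBeta.mulVec (singleLayer m μ g x) = 0) := by
  have hμ : ∀ᵐ y ∂μ, y ∈ S := mem_ae_iff.2 hμS
  refine ⟨fun x hx => integrable_singleLayer_integrand hS hμ hg hx,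
    contDiffOn_singleLayer hS hμ hg, fun x hx => ?_⟩
  rw [← diracOperator_apply]
  exact diracOperator_singleLayer hS hμ hg hx

/-- Let `m > 0`, let `μ` be a finite Borel measure on `ℝ³` whose topological support `S` is
compact, and let `g` be `μ`-integrable.  Then on the open set `ℝ³ ∖ S` the integral defining
`Φg` converges absolutely, `Φg` is smooth there, and `-i Σ_j α_j ∂_j(Φg) + m β Φg = 0` on
`ℝ³ ∖ S`. -/
theorem singleLayer_smooth_and_dirac_harmonic (m : ℝ) (hm : 0 < m)
    (μ : Measure (EuclideanSpace ℝ (Fin 3))) [IsFiniteMeasure μ]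
    (S : Set (EuclideanSpace ℝ (Fin 3))) (hSclosed : IsClosed S) (hScompact : IsCompact S)
    (hSfull : μ Sᶜ = 0)
    (g : EuclideanSpace ℝ (Fin 3) → Fin 4 → ℂ) (hg : Integrable g μ) :
    (∀ x ∉ S, Integrable (fun y => (phiFund m (x - y)).mulVec (g y)) μ) ∧
    ContDiffOn ℝ (⊤ : ℕ∞) (singleLayer m μ g) Sᶜ ∧
    (∀ x ∉ S,
      (-Complex.I) • (∑ j : Fin 3, (diracAlpha j).mulVec
          (fderiv ℝ (singleLayer m μ g) x (EuclideanSpace.single j 1))) +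
        (m : ℂ) • diracBeta.mulVec (singleLayer m μ g x) = 0) :=
  singleLayer_smooth_and_dirac_harmonic_general m μ hScompact hSfull g hg
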